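/- arXiv:1502.02129 — 6 statements merged into one kernel-verified Lean document; each statement's English description precedes it below -/
import Mathlib

section
/- Let X be a metric space, let 𝒱 = {V_1, …, V_n} be a finite open covering of X, and let A ⊆ X be a subset without isolated points. Then there exists a finite open covering 𝒰 = {U_1, …, U_n} of X with U_i ⊆ V_i for every i such that: (a) the refinement U_i ⊆ V_i induces a simplicial isomorphism of nerves, i.e. for every set S ⊆ {1, …, n} of indices, ⋂_{i∈S} U_i ≠ ∅ if and only if ⋂_{i∈S} V_i ≠ ∅; and (b) 𝒰 is canonical on A, i.e. for every i with U_i ∩ A ≠ ∅ there exists a nonempty open set W ⊆ U_i with W ∩ A ≠ ∅ and W ∩ U_j = ∅ for all j ≠ i. -/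
/-- **Canonization of a finite covering.**
For every finite open covering `𝒱 = {V_i}` of a metric space `X` and every subset
`A ⊆ X` without isolated points, there is a finite open covering `𝒰 = {U_i}` with
`U_i ⊆ V_i` which has the same nonempty-intersection pattern (so the refinement induces
a simplicial isomorphism of nerves) and which is canonical on `A`: every `U_i` meeting
`A` has a kernel (a nonempty open subset of `U_i` disjoint from all other `U_j`)
meeting `A`. -/
theorem canonization {X : Type*} [MetricSpace X] {ι : Type*} [Fintype ι]
    (V : ι → Set X) (hVopen : ∀ i, IsOpen (V i)) (hVcov : ⋃ i, V i = Set.univ)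
    (A : Set X) (hA : ∀ x ∈ A, x ∈ closure (A \ {x})) :
    ∃ U : ι → Set X,
      (∀ i, IsOpen (U i)) ∧
      (⋃ i, U i = Set.univ) ∧
      (∀ i, U i ⊆ V i) ∧
      (∀ S : Set ι, (⋂ i ∈ S, U i).Nonempty ↔ (⋂ i ∈ S, V i).Nonempty) ∧
      (∀ i, (U i ∩ A).Nonempty →
        ∃ W : Set X, IsOpen W ∧ W.Nonempty ∧ W ⊆ U i ∧ (W ∩ A).Nonempty ∧
          ∀ j, j ≠ i → W ∩ U j = ∅) := by
  classical
  -- witness points for the nerve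
  have hP : ∃ P : Set X, P.Finite ∧ ∀ S : Set ι, (⋂ i ∈ S, V i).Nonempty →
      ∃ p ∈ P, p ∈ ⋂ i ∈ S, V i := by
    refine ⟨Set.range (fun S : {S : Set ι // (⋂ i ∈ S, V i).Nonempty} => S.2.some),
      Set.finite_range _, ?_⟩
    intro S hS
    exact ⟨_, ⟨⟨S, hS⟩, rfl⟩, hS.some_mem⟩
  obtain ⟨P, hPfin, hP⟩ := hP
  have hinf : ∀ i : {i // (V i ∩ A).Nonempty}, ((V i ∩ A) \ P).Infinite := by
    rintro ⟨i, x, hxV, hxA⟩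
    have h1 : AccPt x (Filter.principal A) := by
      rw [accPt_principal_iff_clusterPt, ← mem_closure_iff_clusterPt]
      exact hA x hxA
    have h2 := h1.nhds_inter ((hVopen i).mem_nhds hxV)
    exact (Set.Infinite.of_accPt h2).sdiff hPfin
  have hch : ∀ i : {i // (V i ∩ A).Nonempty}, ∃ t : Finset X,
      (t : Set X) ⊆ (V i ∩ A) \ P ∧ t.card = Fintype.card {i // (V i ∩ A).Nonempty} :=
    fun i => (hinf i).exists_subset_card_eq _
  choose t htsub htcard using hch
  obtain ⟨a, hainj, hat⟩ := (Finset.all_card_le_biUnion_card_iff_exists_injective t).1 (by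
    intro s
    rcases s.eq_empty_or_nonempty with rfl | ⟨i, hi⟩
    · simp
    · calc s.card ≤ Fintype.card _ := Finset.card_le_univ s
        _ = (t i).card := (htcard i).symm
        _ ≤ _ := Finset.card_le_card (Finset.subset_biUnion_of_mem t hi))
  have ha : ∀ i : {i // (V i ∩ A).Nonempty}, a i ∈ (V i ∩ A) \ P := fun i => htsub i (hat i)
  obtain ⟨O, hO, hOdisj⟩ := (Set.finite_range a).t2_separation
  have hr : ∀ i : {i // (V i ∩ A).Nonempty}, ∃ r > 0, Metric.closedBall (a i) r ⊆ V i ∩ O (a i) ∩ Pᶜ := by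
    intro i
    apply Metric.nhds_basis_closedBall.mem_iff.1
    exact ((((hVopen i).inter (hO _).2).inter hPfin.isClosed.isOpen_compl)).mem_nhds
      ⟨⟨(ha i).1.1, (hO _).1⟩, (ha i).2⟩
  choose r hr0 hr using hr
  have hdisj : ∀ i j x, x ∈ Metric.closedBall (a i) (r i) → x ∈ Metric.closedBall (a j) (r j) →
      i = j := by
    intro i j x hi hj
    by_contra hne
    exact Set.disjoint_left.1 (hOdisj ⟨i, rfl⟩ ⟨j, rfl⟩ (fun h => hne (hainj h)))
      (hr i hi).1.2 (hr j hj).1.2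
  refine ⟨fun i => V i ∩ ⋂ j : {i // (V i ∩ A).Nonempty}, ⋂ _ : (j : ι) ≠ i,
    (Metric.closedBall (a j) (r j))ᶜ, ?_, ?_, ?_, ?_, ?_⟩
  · intro i
    refine (hVopen i).inter (isOpen_iInter_of_finite fun j => isOpen_iInter_of_finite fun _ =>
      Metric.isClosed_closedBall.isOpen_compl)
  · rw [Set.eq_univ_iff_forall]
    intro x
    rw [Set.mem_iUnion]
    by_cases h : ∃ j, x ∈ Metric.closedBall (a j) (r j)
    · obtain ⟨j, hj⟩ := h
      refine ⟨j, (hr j hj).1.1, ?_⟩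
      simp only [Set.mem_iInter]
      intro k hk hx
      exact hk (congrArg Subtype.val (hdisj k j x hx hj))
    · have hx : x ∈ ⋃ i, V i := hVcov ▸ Set.mem_univ x
      obtain ⟨i, hi⟩ := Set.mem_iUnion.1 hx
      refine ⟨i, hi, ?_⟩
      simp only [Set.mem_iInter]
      intro k _ hx
      exact h ⟨k, hx⟩
  · exact fun i => Set.inter_subset_left
  · intro S
    constructor
    · exact Set.Nonempty.mono (Set.iInter₂_mono fun i _ => Set.inter_subset_left)
    · intro hS
      obtain ⟨p, hpP, hp⟩ := hP S hS
      refine ⟨p, ?_⟩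
      simp only [Set.mem_iInter] at hp
      simp only [Set.mem_iInter, Set.mem_inter_iff]
      exact fun i hi => ⟨hp i hi, fun j _ hx => (hr j hx).2 hpP⟩
  · rintro i ⟨x, hxU, hxA⟩
    let k : {i // (V i ∩ A).Nonempty} := ⟨i, x, hxU.1, hxA⟩
    have hc := Metric.mem_ball_self (x := a k) (hr0 k)
    refine ⟨Metric.ball (a k) (r k), Metric.isOpen_ball, ⟨_, hc⟩, ?_, ⟨_, hc, (ha k).1.2⟩, ?_⟩
    · intro y hy
      have hy' := Metric.ball_subset_closedBall hy
      refine ⟨(hr k hy').1.1, ?_⟩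
      simp only [Set.mem_iInter]
      intro j hj hx
      exact hj (congrArg Subtype.val (hdisj j k y hx hy'))
    · intro j hj
      rw [Set.eq_empty_iff_forall_notMem]
      rintro y ⟨hy, hyU⟩
      have h2 := hyU.2
      simp only [Set.mem_iInter] at h2
      exact h2 k (Ne.symm hj) (Metric.ball_subset_closedBall hy)
end

section
/- Let X be a metric space, let A ⊆ X be a subset without isolated points, and let 𝒰 = {U_i}_{i∈ι} be a finite open covering of X that is canonical on A. Let σ = {i_0, i_1, …, i_m} ⊆ ι be a set of indices such that ⋂_{i∈σ} U_i = ∅ and U_i ∩ A ≠ ∅ for every i ∈ σ. Then there exists a finite open covering 𝒲 = {W_i}_{i∈ι} of X, canonical on A, with U_i ⊆ W_i for every i ∈ ι, such that for every set S ⊆ ι of indices: ⋂_{i∈S} W_i ≠ ∅ if and only if (⋂_{i∈S} U_i ≠ ∅ or S ⊆ σ). (That is, 𝒲 is an extension of 𝒰 with respect to {U_{i_0}, …, U_{i_m}}: the nerve of 𝒲 is obtained from the nerve of 𝒰 by adjoining the m-dimensional simplex corresponding to σ together with its faces.) -/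
/-- **Extension of a canonical covering.**
If `𝒰 = {U_i}` is a finite open covering of a metric space `X`, canonical on a set `A`
without isolated points, and `σ` is a set of indices whose corresponding elements have
empty total intersection but each meets `A`, then there is a finite open covering
`𝒲 = {W_i}`, canonical on `A`, with `U_i ⊆ W_i`, whose nerve is obtained from the nerve
of `𝒰` by adjoining the simplex corresponding to `σ` together with its faces:
for every index set `S`, `⋂_{i∈S} W_i ≠ ∅ ↔ (⋂_{i∈S} U_i ≠ ∅ ∨ S ⊆ σ)`. -/
theorem extension_of_canonical_covering {X : Type*} [MetricSpace X] {ι : Type*} [Fintype ι]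
    (A : Set X) (hA : ∀ x ∈ A, x ∈ closure (A \ {x}))
    (U : ι → Set X) (hUopen : ∀ i, IsOpen (U i)) (hUcov : ⋃ i, U i = Set.univ)
    (hUcanon : ∀ i, (U i ∩ A).Nonempty →
      ∃ K : Set X, IsOpen K ∧ K.Nonempty ∧ K ⊆ U i ∧ (K ∩ A).Nonempty ∧
        ∀ j, j ≠ i → K ∩ U j = ∅)
    (σ : Finset ι) (hσne : σ.Nonempty)
    (hσ : ⋂ i ∈ σ, U i = ∅) (hσA : ∀ i ∈ σ, (U i ∩ A).Nonempty) :
    ∃ W : ι → Set X,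
      (∀ i, IsOpen (W i)) ∧
      (⋃ i, W i = Set.univ) ∧
      (∀ i, U i ⊆ W i) ∧
      (∀ i, (W i ∩ A).Nonempty →
        ∃ K : Set X, IsOpen K ∧ K.Nonempty ∧ K ⊆ W i ∧ (K ∩ A).Nonempty ∧
          ∀ j, j ≠ i → K ∩ W j = ∅) ∧
      (∀ S : Set ι, (⋂ i ∈ S, W i).Nonempty ↔
        ((⋂ i ∈ S, U i).Nonempty ∨ S ⊆ (σ : Set ι))) := by
  classical
  obtain ⟨i0, hi0⟩ := hσne
  obtain ⟨K, hKo, -, hKU, ⟨x, hxK, hxA⟩, hKd⟩ := hUcanon i0 (hσA i0 hi0)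
  obtain ⟨y, hyK, hyA, hyx⟩ := mem_closure_iff.1 (hA x hxA) K hKo hxK
  obtain ⟨P, Q, hPo, hQo, hxP, hyQ, hPQ⟩ := t2_separation (fun h : x = y => hyx h.symm)
  have hKd' : ∀ j p, p ∈ K → p ∈ U j → j = i0 := by
    intro j p hp hj
    by_contra h
    have : p ∈ K ∩ U j := ⟨hp, hj⟩
    rw [hKd j h] at this
    exact this
  have hW : ∀ i p, p ∈ (if i ∈ σ then U i ∪ (P ∩ K) else U i) ↔
      (p ∈ U i ∨ (i ∈ σ ∧ p ∈ P ∧ p ∈ K)) := by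
    intro i p
    split_ifs with h <;> simp [h]
  have key : ∀ i, (U i ∩ A).Nonempty → ∃ L : Set X, IsOpen L ∧ L ⊆ U i ∧ (L ∩ A).Nonempty ∧
      (∀ j, j ≠ i → L ∩ U j = ∅) ∧ ∀ p ∈ L, p ∈ P → p ∈ K → False := by
    intro i hi
    by_cases h : i = i0
    · subst h
      refine ⟨Q ∩ K, hQo.inter hKo, fun p hp => hKU hp.2, ⟨y, ⟨hyQ, hyK⟩, hyA⟩, ?_, ?_⟩
      · intro j hj
        ext p
        simp only [Set.mem_inter_iff, Set.mem_empty_iff_false, iff_false]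
        rintro ⟨⟨-, hp⟩, hpj⟩
        exact hj (hKd' j p hp hpj)
      · intro p hp hpP _
        exact Set.disjoint_left.1 hPQ hpP hp.1
    · obtain ⟨L, hLo, -, hLU, hLA, hLd⟩ := hUcanon i hi
      exact ⟨L, hLo, hLU, hLA, hLd, fun p hp _ hpK => h (hKd' i p hpK (hLU hp))⟩
  refine ⟨fun i => if i ∈ σ then U i ∪ (P ∩ K) else U i, ?_, ?_, ?_, ?_, ?_⟩
  · intro i
    dsimp only
    split_ifs
    · exact (hUopen i).union (hPo.inter hKo)
    · exact hUopen i
  · rw [Set.eq_univ_iff_forall] at hUcov ⊢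
    intro p
    obtain ⟨i, hi⟩ := Set.mem_iUnion.1 (hUcov p)
    exact Set.mem_iUnion.2 ⟨i, (hW i p).2 (Or.inl hi)⟩
  · intro i p hp
    exact (hW i p).2 (Or.inl hp)
  · rintro i ⟨q, hq, hqA⟩
    have hi : (U i ∩ A).Nonempty := by
      rcases (hW i q).1 hq with h | h
      · exact ⟨q, h, hqA⟩
      · exact hσA i h.1
    obtain ⟨L, hLo, hLU, hLA, hLd, hLV⟩ := key i hi
    refine ⟨L, hLo, hLA.mono Set.inter_subset_left, fun p hp => (hW i p).2 (Or.inl (hLU hp)),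
      hLA, ?_⟩
    intro j hj
    rw [Set.eq_empty_iff_forall_notMem]
    rintro p ⟨hp, hpj⟩
    rcases (hW j p).1 hpj with h | h
    · exact Set.eq_empty_iff_forall_notMem.1 (hLd j hj) p ⟨hp, h⟩
    · exact hLV p hp h.2.1 h.2.2
  · intro S
    constructor
    · rintro ⟨p, hp⟩
      have hp' : ∀ i ∈ S, _ := fun i hi => (hW i p).1 (Set.mem_iInter₂.1 hp i hi)
      by_cases hV : p ∈ P ∧ p ∈ K
      · right
        intro i hi
        rcases hp' i hi with h | h
        · rw [hKd' i p hV.2 h]; exact hi0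
        · exact h.1
      · left
        refine ⟨p, Set.mem_iInter₂.2 fun i hi => ?_⟩
        exact (hp' i hi).resolve_right fun h => hV h.2
    · rintro (⟨p, hp⟩ | hS)
      · exact ⟨p, Set.mem_iInter₂.2 fun i hi => (hW i p).2 (Or.inl (Set.mem_iInter₂.1 hp i hi))⟩
      · exact ⟨x, Set.mem_iInter₂.2 fun i hi => (hW i x).2 (Or.inr ⟨hS hi, hxP, hxK⟩)⟩
end

section
/- Let X be a metric space, let 𝒰 be an open covering of X, let U ∈ 𝒰, let x ∈ X and ε > 0 be such that the open ball B(x, ε) is contained in U and B(x, ε) ∩ V = ∅ for every element V ∈ 𝒰 with V ≠ U (i.e. B(x,ε) lies in a kernel of U), and let m ≥ 2 be a natural number. Define U(1) = U \ cl(B(x, ε/2)), U(k) = B(x, ε/(k−1)) \ cl(B(x, ε/(k+1))) for 1 < k < m, and U(m) = B(x, ε/(m−1)). Then: (a) each U(k) is open and U(1) ∪ U(2) ∪ ⋯ ∪ U(m) = U, so that the grating 𝒰′ = (𝒰 \ {U}) ∪ {U(1), …, U(m)} is again an open covering of X; (b) U(k) ∩ U(l) = ∅ whenever |k − l| ≥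 2; and (c) for every k ≥ 2 and every V ∈ 𝒰 with V ≠ U, U(k) ∩ V = ∅. -/
/-- The `k`-th set of the grating of a covering element `U` with respect to the
4-tuple `{U, x, ε, m}`:
`U(1) = U \ cl(B(x, ε/2))`,
`U(k) = B(x, ε/(k−1)) \ cl(B(x, ε/(k+1)))` for `1 < k < m`, and
`U(m) = B(x, ε/(m−1))`. -/
def gratingSet {X : Type*} [MetricSpace X] (U : Set X) (x : X) (ε : ℝ) (m k : ℕ) :
    Set X :=
  if k = 1 then U \ closure (Metric.ball x (ε / 2))
  else if k = m then Metric.ball x (ε / (m - 1 : ℕ))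
  else Metric.ball x (ε / (k - 1 : ℕ)) \ closure (Metric.ball x (ε / (k + 1 : ℕ)))

theorem grating_sub {X : Type*} [MetricSpace X] (U : Set X) (x : X) (ε : ℝ) (m k : ℕ)
    (hk : 2 ≤ k) : gratingSet U x ε m k ⊆ Metric.ball x (ε / (k - 1 : ℕ)) := by
  unfold gratingSet
  rw [if_neg (by omega)]
  split_ifs with h
  · rw [h]
  · exact Set.diff_subset

theorem grating_out {X : Type*} [MetricSpace X] (U : Set X) (x : X) (ε : ℝ) (m k : ℕ)
    (hk : k < m) (y : X) (hy : y ∈ gratingSet U x ε m k) :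
    y ∉ closure (Metric.ball x (ε / (k + 1 : ℕ))) := by
  unfold gratingSet at hy
  split_ifs at hy with h h'
  · subst h
    have := hy.2
    norm_num
    exact this
  · omega
  · exact hy.2

theorem grating_ball {X : Type*} [MetricSpace X] (x : X) (ε : ℝ) (hε : 0 < ε) (a b : ℕ)
    (ha : 1 ≤ a) (h : a ≤ b) :
    Metric.ball x (ε / b) ⊆ Metric.ball x (ε / a) := by
  apply Metric.ball_subset_ball
  have : (0 : ℝ) < a := by exact_mod_cast ha
  gcongr

theorem grating_cl {X : Type*} [MetricSpace X] (x : X) (ε : ℝ) (hε : 0 < ε) (a b : ℕ)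
    (ha : 1 ≤ a) (h : a < b) :
    closure (Metric.ball x (ε / b)) ⊆ Metric.ball x (ε / a) := by
  refine Metric.closure_ball_subset_closedBall.trans (Metric.closedBall_subset_ball ?_)
  have : (0 : ℝ) < a := by exact_mod_cast ha
  gcongr

/-- **The grating of a covering is a covering.**
Let `𝒰` be an open covering of a metric space `X`, let `U ∈ 𝒰`, and let `B(x, ε)` be a
ball contained in a kernel of `U` (i.e. `B(x, ε) ⊆ U` and `B(x, ε)` misses every other
element of `𝒰`), and let `m ≥ 2`. Then:
(a) each grating set `U(k)`, `1 ≤ k ≤ m`, is open and `U(1) ∪ ⋯ ∪ U(m) = U`, so the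
grating `𝒰′ = (𝒰 \ {U}) ∪ {U(1), …, U(m)}` is again an open covering of `X`;
(b) `U(k) ∩ U(l) = ∅` whenever `|k − l| ≥ 2`;
(c) for every `k ≥ 2` and every `V ∈ 𝒰` with `V ≠ U`, `U(k) ∩ V = ∅`. -/
theorem grating_is_covering {X : Type*} [MetricSpace X]
    (𝒰 : Set (Set X)) (hopen : ∀ V ∈ 𝒰, IsOpen V) (hcov : ⋃₀ 𝒰 = Set.univ)
    (U : Set X) (hU : U ∈ 𝒰) (x : X) (ε : ℝ) (hε : 0 < ε)
    (hball : Metric.ball x ε ⊆ U)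
    (hker : ∀ V ∈ 𝒰, V ≠ U → Metric.ball x ε ∩ V = ∅)
    (m : ℕ) (hm : 2 ≤ m) :
    (∀ k, 1 ≤ k → k ≤ m → IsOpen (gratingSet U x ε m k)) ∧
    (⋃ k ∈ Set.Icc 1 m, gratingSet U x ε m k) = U ∧
    (⋃₀ ((𝒰 \ {U}) ∪ (gratingSet U x ε m '' Set.Icc 1 m)) = Set.univ) ∧
    (∀ k l, 1 ≤ k → k ≤ m → 1 ≤ l → l ≤ m → 2 ≤ |(k : ℤ) - (l : ℤ)| →
      gratingSet U x ε m k ∩ gratingSet U x ε m l = ∅) ∧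
    (∀ k, 2 ≤ k → k ≤ m → ∀ V ∈ 𝒰, V ≠ U → gratingSet U x ε m k ∩ V = ∅) := by
  have hsub1 : ∀ k, 2 ≤ k → gratingSet U x ε m k ⊆ Metric.ball x ε := by
    intro k hk
    refine (grating_sub U x ε m k hk).trans ?_
    have := grating_ball x ε hε 1 (k - 1) le_rfl (by omega)
    simpa using this
  have hunion : (⋃ k ∈ Set.Icc 1 m, gratingSet U x ε m k) = U := by
    apply Set.Subset.antisymm
    · intro y hy
      simp only [Set.mem_iUnion] at hy
      obtain ⟨k, ⟨hk1, hkm⟩, hy⟩ := hy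
      by_cases h : k = 1
      · subst h
        simp only [gratingSet, if_true] at hy
        exact hy.1
      · exact hball (hsub1 k (by omega) hy)
    · intro y hy
      simp only [Set.mem_iUnion]
      by_contra hne
      push Not at hne
      have key : ∀ k, 1 ≤ k → k < m → y ∈ closure (Metric.ball x (ε / (k + 1 : ℕ))) := by
        intro k hk
        induction k, hk using Nat.le_induction with
        | base =>
          intro h1
          by_contra hc
          apply hne 1 ⟨le_rfl, by omega⟩
          simp only [gratingSet, if_true]
          refine ⟨hy, ?_⟩
          norm_num at hc
          exact hc
        | succ k hk ih =>
          intro h1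
          by_contra hc
          apply hne (k + 1) ⟨by omega, by omega⟩
          unfold gratingSet
          rw [if_neg (by omega), if_neg (by omega)]
          exact ⟨grating_cl x ε hε _ _ (by omega) (by omega) (ih (by omega)), hc⟩
      apply hne m ⟨by omega, le_rfl⟩
      unfold gratingSet
      rw [if_neg (by omega), if_pos rfl]
      exact grating_cl x ε hε _ _ (by omega) (by omega) (key (m - 1) (by omega) (by omega))
  have hdis : ∀ k l, 1 ≤ k → l ≤ m → k + 2 ≤ l →
      gratingSet U x ε m k ∩ gratingSet U x ε m l = ∅ := by
    intro k l hk hl hkl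
    ext y
    simp only [Set.mem_inter_iff, Set.mem_empty_iff_false, iff_false, not_and]
    intro h1 h2
    apply grating_out U x ε m k (by omega) y h1
    apply subset_closure
    exact grating_ball x ε hε _ _ (by omega) (by omega) (grating_sub U x ε m l (by omega) h2)
  refine ⟨?_, hunion, ?_, ?_, ?_⟩
  · intro k _ _
    unfold gratingSet
    split_ifs
    · exact (hopen U hU).sdiff isClosed_closure
    · exact Metric.isOpen_ball
    · exact Metric.isOpen_ball.sdiff isClosed_closure
  · rw [Set.sUnion_union, Set.sUnion_image, hunion, ← hcov]
    ext y
    simp only [Set.mem_union, Set.mem_sUnion, Set.mem_diff, Set.mem_singleton_iff]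
    constructor
    · rintro (⟨V, hV, hy⟩ | hy)
      · exact ⟨V, hV.1, hy⟩
      · exact ⟨U, hU, hy⟩
    · rintro ⟨V, hV, hy⟩
      by_cases h : V = U
      · right; rwa [← h]
      · exact Or.inl ⟨V, ⟨hV, h⟩, hy⟩
  · intro k l hk hkm hl hlm h
    rcases le_abs.mp h with h | h
    · rw [Set.inter_comm]
      exact hdis l k hl hkm (by omega)
    · exact hdis k l hk hlm (by omega)
  · intro k hk _ V hV hVU
    apply Set.subset_eq_empty _ (hker V hV hVU)
    exact Set.inter_subset_inter_left _ (hsub1 k hk)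
end

section
/- Let X be a metric space, let U ⊆ X be a connected open set, let x ∈ U and ε > 0 be such that B(x, ε) ⊆ U and there exists a point y ∈ U with dist(x, y) ≥ ε, and let m ≥ 2 be a natural number. Define U(1) = U \ cl(B(x, ε/2)), U(k) = B(x, ε/(k−1)) \ cl(B(x, ε/(k+1))) for 1 < k < m, and U(m) = B(x, ε/(m−1)). Then each U(k) is nonempty, U(k) ∩ U(k+1) ≠ ∅ for every 1 ≤ k < m, and U(k) ∩ U(l) = ∅ whenever |k − l| ≥ 2. (Hence the nerve of the family {U(1), …, U(m)} is a segment subdivided into m − 1 parts, so if the replaced element U of a covering is connected, the nerve of the grating equals the nerve of the original covering with the vertex U replaced by this subdivided segment.) -/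
theorem grating_not_cl {X : Type*} [MetricSpace X] {U : Set X} {x : X} {ε : ℝ} {m k : ℕ}
    (hk : k < m) {z : X} (hz : z ∈ gratingSet U x ε m k) :
    z ∉ closure (Metric.ball x (ε / (k + 1 : ℕ))) := by
  unfold gratingSet at hz
  split_ifs at hz with h1 h2
  · subst h1
    have := hz.2
    norm_num at this ⊢
    exact this
  · omega
  · exact hz.2

theorem grating_ball_s3 {X : Type*} [MetricSpace X] {U : Set X} {x : X} {ε : ℝ} {m k : ℕ}
    (hk : 2 ≤ k) {z : X} (hz : z ∈ gratingSet U x ε m k) :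
    z ∈ Metric.ball x (ε / (k - 1 : ℕ)) := by
  unfold gratingSet at hz
  split_ifs at hz with h1 h2
  · omega
  · subst h2; exact hz
  · exact hz.1

theorem grating_disj {X : Type*} [MetricSpace X] {U : Set X} {x : X} {ε : ℝ} (hε : 0 < ε)
    {m k l : ℕ} (hkl : k + 2 ≤ l) (hl : l ≤ m) {z : X} (hz : z ∈ gratingSet U x ε m k)
    (hz' : z ∈ gratingSet U x ε m l) : False := by
  apply grating_not_cl (by omega) hz
  apply subset_closure
  refine Metric.ball_subset_ball ?_ (grating_ball_s3 (by omega) hz')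
  apply div_le_div_of_nonneg_left hε.le
  · positivity
  · exact_mod_cast (by omega : k + 1 ≤ l - 1)

theorem not_cl_ball {X : Type*} [MetricSpace X] {x z : X} {r : ℝ} (h : r < dist z x) :
    z ∉ closure (Metric.ball x r) := fun hz => by
  have := Metric.closure_ball_subset_closedBall hz
  rw [Metric.mem_closedBall] at this
  linarith

/-- **The nerve of the grating sets of a connected element is a subdivided segment.**
If `U` is a connected open set in a metric space, `x ∈ U`, `ε > 0` with `B(x, ε) ⊆ U`
and some point of `U` lies at distance `≥ ε` from `x`, and `m ≥ 2`, then each grating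
set `U(k)` (`1 ≤ k ≤ m`) is nonempty, consecutive grating sets intersect, and
`U(k) ∩ U(l) = ∅` whenever `|k − l| ≥ 2`; hence the nerve of `{U(1), …, U(m)}` is a
segment subdivided into `m − 1` parts. -/
theorem grating_nerve_of_connected {X : Type*} [MetricSpace X]
    (U : Set X) (hUopen : IsOpen U) (hUconn : IsConnected U)
    (x : X) (hx : x ∈ U) (ε : ℝ) (hε : 0 < ε)
    (hball : Metric.ball x ε ⊆ U)
    (hfar : ∃ y ∈ U, ε ≤ dist x y)
    (m : ℕ) (hm : 2 ≤ m) :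
    (∀ k, 1 ≤ k → k ≤ m → (gratingSet U x ε m k).Nonempty) ∧
    (∀ k, 1 ≤ k → k < m → (gratingSet U x ε m k ∩ gratingSet U x ε m (k + 1)).Nonempty) ∧
    (∀ k l, 1 ≤ k → k ≤ m → 1 ≤ l → l ≤ m → 2 ≤ |(k : ℤ) - (l : ℤ)| →
      gratingSet U x ε m k ∩ gratingSet U x ε m l = ∅) := by
  have key : ∀ k, 1 ≤ k → k < m →
      (gratingSet U x ε m k ∩ gratingSet U x ε m (k + 1)).Nonempty := by
    intro k hk hkm
    have hk0 : (1 : ℝ) ≤ k := by exact_mod_cast hk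
    have hlt : ε / (k + 1 : ℕ) < ε / k := by
      apply div_lt_div_of_pos_left hε (by positivity)
      push_cast; linarith
    obtain ⟨r, hr1, hr2⟩ := exists_between hlt
    have hr0 : 0 < r := lt_trans (by positivity) hr1
    have hrε : r ≤ ε := hr2.le.trans (div_le_self hε.le hk0)
    obtain ⟨y, hyU, hy⟩ := hfar
    have hc : ContinuousOn (fun z => dist z x) U := by fun_prop
    obtain ⟨z, hzU, hz⟩ := hUconn.isPreconnected.intermediate_value hx hyU hc
      (show r ∈ Set.Icc (dist x x) (dist y x) by
        rw [dist_self, dist_comm y x]; exact ⟨hr0.le, hrε.trans hy⟩)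
    simp only at hz
    refine ⟨z, ?_, ?_⟩
    · unfold gratingSet
      split_ifs with h1 h2
      · subst h1
        refine ⟨hzU, not_cl_ball ?_⟩
        rw [hz]; norm_num at hr1; exact hr1
      · omega
      · refine ⟨?_, not_cl_ball (by rw [hz]; exact hr1)⟩
        rw [Metric.mem_ball, hz]
        refine hr2.trans_le (div_le_div_of_nonneg_left hε.le ?_ ?_)
        · exact_mod_cast (by omega : 0 < k - 1)
        · exact_mod_cast (by omega : k - 1 ≤ k)
    · unfold gratingSet
      split_ifs with h1 h2
      · omega
      · subst h2
        rw [Metric.mem_ball, hz]; simpa using hr2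
      · refine ⟨by rw [Metric.mem_ball, hz]; simpa using hr2, not_cl_ball ?_⟩
        rw [hz]
        refine lt_of_le_of_lt (div_le_div_of_nonneg_left hε.le (by positivity) ?_) hr1
        exact_mod_cast (by omega : k + 1 ≤ k + 1 + 1)
  refine ⟨?_, key, ?_⟩
  · intro k hk hkm
    rcases hkm.lt_or_eq with h | h
    · exact (key k hk h).mono Set.inter_subset_left
    · have := (key (k - 1) (by omega) (by omega)).mono Set.inter_subset_right
      rwa [Nat.sub_add_cancel hk] at this
  · intro k l hk hkm hl hlm hkl
    rw [Set.eq_empty_iff_forall_notMem]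
    rintro z ⟨h1, h2⟩
    rcases le_abs.mp hkl with h | h
    · exact grating_disj hε (by omega) hkm h2 h1
    · exact grating_disj hε (by omega) hlm h1 h2
end

section
/- Let n ≥ 1 and let X ⊆ ℝⁿ be a cellular set, i.e. X = ⋂_{i=1}^∞ D_i where each D_i ⊆ ℝⁿ is homeomorphic to the closed unit ball of ℝⁿ and D_{i+1} ⊆ int(D_i). Then for every ε > 0 there exist: a compact set D ⊆ ℝⁿ homeomorphic to the closed unit ball of ℝⁿ with X ⊆ int(D) and D ⊆ { y : dist(y, X) < ε }; a finite family (U_i)_{i∈ι} of open subsets of ℝⁿ covering D, each of diameter less than ε; and a finite family (W_i)_{i∈ι} of relatively open subsets of X covering X, each of diameter less than ε, such that for every set S ⊆ ι of indices, ⋂_{i∈S} W_i ≠ ∅ if and only if ⋂_{i∈S} U_i ≠ ∅ (i.e. the nerve of the covering (W_i) of X is simplicially isomorphic to the nerve of the covering (U_i) of the topological n-cell D). -/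
/-- **Theorem 1.1 (quantitative form).**
If `X ⊆ ℝⁿ` is cellular, i.e. `X = ⋂ D_i` with each `D_i` homeomorphic to the closed
unit ball of `ℝⁿ` and `D_{i+1} ⊆ int(D_i)`, then for every `ε > 0` there exist: a
compact set `Dc` homeomorphic to the closed unit ball with `X ⊆ int(Dc)` and
`Dc ⊆ {y : dist(y, X) < ε}`; a finite family `(U_i)` of open subsets of `ℝⁿ` covering
`Dc`, each of diameter `< ε`; and a finite family `(W_i)` of relatively open subsets
of `X` covering `X`, each of diameter `< ε`, with the same nonempty-intersection
pattern as `(U_i)` — i.e. the nerve of the covering `(W_i)` of `X` is simplicially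
isomorphic to the nerve of the covering `(U_i)` of the topological `n`-cell `Dc`. -/
theorem cellular_admits_fine_coverings_with_cell_nerve (n : ℕ) (hn : 1 ≤ n)
    (X : Set (EuclideanSpace ℝ (Fin n)))
    (D : ℕ → Set (EuclideanSpace ℝ (Fin n)))
    (hDcell : ∀ i, Nonempty
      ((D i) ≃ₜ (Metric.closedBall (0 : EuclideanSpace ℝ (Fin n)) 1)))
    (hDnest : ∀ i, D (i + 1) ⊆ interior (D i))
    (hX : X = ⋂ i, D i) :
    ∀ ε : ℝ, 0 < ε →
      ∃ Dc : Set (EuclideanSpace ℝ (Fin n)),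
        IsCompact Dc ∧
        Nonempty (Dc ≃ₜ (Metric.closedBall (0 : EuclideanSpace ℝ (Fin n)) 1)) ∧
        X ⊆ interior Dc ∧
        Dc ⊆ {y | Metric.infDist y X < ε} ∧
        ∃ (ι : Type) (_ : Fintype ι)
          (U : ι → Set (EuclideanSpace ℝ (Fin n))) (W : ι → Set X),
          (∀ i, IsOpen (U i)) ∧
          Dc ⊆ ⋃ i, U i ∧
          (∀ i, Metric.diam (U i) < ε) ∧
          (∀ i, IsOpen (W i)) ∧
          (⋃ i, W i = Set.univ) ∧
          (∀ i, Metric.diam (W i) < ε) ∧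
          (∀ S : Set ι, (⋂ i ∈ S, W i).Nonempty ↔ (⋂ i ∈ S, U i).Nonempty) := by
  intro ε hε
  have hDc : ∀ i, IsCompact (D i) := by
    intro i
    obtain ⟨e⟩ := hDcell i
    haveI : CompactSpace (Metric.closedBall (0 : EuclideanSpace ℝ (Fin n)) 1) :=
      isCompact_iff_compactSpace.mp (isCompact_closedBall 0 1)
    exact isCompact_iff_compactSpace.mpr e.symm.compactSpace
  have hDne : ∀ i, (D i).Nonempty := by
    intro i
    obtain ⟨e⟩ := hDcell i
    exact ⟨_, (e.symm ⟨0, by simp⟩).2⟩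
  have hanti : Antitone D :=
    antitone_nat_of_succ_le fun i => (hDnest i).trans interior_subset
  have hdir : Directed (· ⊇ ·) D := hanti.directed_ge
  have hXne : X.Nonempty := by
    rw [hX]
    exact IsCompact.nonempty_iInter_of_directed_nonempty_isCompact_isClosed D hdir hDne hDc
      fun i => (hDc i).isClosed
  have hXc : IsCompact X := by
    rw [hX]
    exact (hDc 0).of_isClosed_subset (isClosed_iInter fun i => (hDc i).isClosed) (Set.iInter_subset D 0)
  obtain ⟨t, htX, htfin, htcov⟩ :=
    hXc.elim_finite_subcover_image (b := X)
      (c := fun x => Metric.ball x (ε / 8)) (fun _ _ => Metric.isOpen_ball)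
      (fun x hx => Set.mem_iUnion₂.mpr ⟨x, hx, Metric.mem_ball_self (by positivity)⟩)
  obtain ⟨N, f, hf⟩ : ∃ (N : ℕ) (f : Fin N → EuclideanSpace ℝ (Fin n)),
      X ⊆ ⋃ i, Metric.ball (f i) (ε / 8) := by
    haveI := htfin.fintype
    let e := Fintype.equivFin t
    refine ⟨Fintype.card t, fun i => (e.symm i : EuclideanSpace ℝ (Fin n)), ?_⟩
    intro x hx
    obtain ⟨y, hy, hxy⟩ := Set.mem_iUnion₂.mp (htcov hx)
    exact Set.mem_iUnion.mpr ⟨e ⟨y, hy⟩, by simpa using hxy⟩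
  let C : Fin N → Set (EuclideanSpace ℝ (Fin n)) :=
    fun i => Metric.closedBall (f i) (ε / 8) ∩ X
  have hCc : ∀ i, IsCompact (C i) := fun i => hXc.inter_left Metric.isClosed_closedBall
  have key : ∀ S : Set (Fin N), ∃ m : ℕ,
      (⋂ i ∈ S, Metric.cthickening (1 / ((m : ℝ) + 1)) (C i)).Nonempty →
      (⋂ i ∈ S, C i).Nonempty := by
    intro S
    by_contra! h
    rcases S.eq_empty_or_nonempty with rfl | ⟨j, hj⟩
    · have := (h 0).2
      simp at this
    have hne : (⋂ m : ℕ, ⋂ i ∈ S, Metric.cthickening (1 / ((m : ℝ) + 1)) (C i)).Nonempty := by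
      have hcl : ∀ m : ℕ, IsClosed (⋂ i ∈ S, Metric.cthickening (1 / ((m : ℝ) + 1)) (C i)) :=
        fun m => isClosed_biInter fun i _ => Metric.isClosed_cthickening
      refine IsCompact.nonempty_iInter_of_directed_nonempty_isCompact_isClosed _ ?_
        (fun m => (h m).1) ?_ hcl
      · refine Antitone.directed_ge ?_
        intro a b hab
        refine Set.iInter₂_mono fun i _ => Metric.cthickening_mono ?_ _
        exact Nat.one_div_le_one_div hab
      · intro m
        exact ((hCc j).cthickening).of_isClosed_subset (hcl m) (Set.biInter_subset_of_mem hj)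
    obtain ⟨x, hx⟩ := hne
    have : x ∈ ⋂ i ∈ S, C i := by
      refine Set.mem_iInter₂.mpr fun i hi => ?_
      have hx' : ∀ m : ℕ, x ∈ Metric.cthickening (1 / ((m : ℝ) + 1)) (C i) :=
        fun m => Set.mem_iInter₂.mp (Set.mem_iInter.mp hx m) i hi
      rw [← (hCc i).isClosed.closure_eq, Metric.closure_eq_iInter_cthickening]
      refine Set.mem_iInter₂.mpr fun δ hδ => ?_
      obtain ⟨m, hm⟩ := exists_nat_one_div_lt hδ
      exact Metric.cthickening_mono hm.le _ (hx' m)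
    rw [(h 0).2] at this
    exact this
  choose m hm using key
  obtain ⟨M, hM⟩ : ∃ M : ℕ, ∀ S, m S ≤ M := by
    obtain ⟨M, hM⟩ := (Set.finite_range m).bddAbove
    exact ⟨M, fun S => hM ⟨S, rfl⟩⟩
  let δ : ℝ := min (1 / ((M : ℝ) + 1)) (ε / 8)
  have hδ : 0 < δ := lt_min (by positivity) (by positivity)
  let U : Fin N → Set (EuclideanSpace ℝ (Fin n)) := fun i => Metric.thickening δ (C i)
  have hUo : ∀ i, IsOpen (U i) := fun i => Metric.isOpen_thickening
  have hUb : ∀ i, U i ⊆ Metric.closedBall (f i) (ε / 4) := by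
    intro i x hx
    obtain ⟨y, hy, hxy⟩ := Metric.mem_thickening_iff.mp hx
    have h1 : dist y (f i) ≤ ε / 8 := hy.1
    have h2 : δ ≤ ε / 8 := min_le_right _ _
    have := dist_triangle x y (f i)
    rw [Metric.mem_closedBall]
    linarith
  have hdiam : ∀ i, Metric.diam (U i) < ε := by
    intro i
    have h1 := Metric.diam_mono (hUb i) Metric.isBounded_closedBall
    have h2 := Metric.diam_closedBall (x := f i) (r := ε / 4) (by positivity)
    linarith
  have hCU : ∀ i, C i ⊆ U i := fun i => Metric.self_subset_thickening hδ _
  have hXU : ∀ x ∈ X, ∃ i, x ∈ C i := by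
    intro x hx
    obtain ⟨i, hi⟩ := Set.mem_iUnion.mp (hf hx)
    exact ⟨i, Metric.ball_subset_closedBall hi, hx⟩
  have hO : IsOpen ((⋃ i, U i) ∩ Metric.thickening ε X) :=
    (isOpen_iUnion hUo).inter Metric.isOpen_thickening
  obtain ⟨k, hk⟩ : ∃ k, D k ⊆ (⋃ i, U i) ∩ Metric.thickening ε X := by
    refine exists_subset_nhds_of_isCompact hdir hDc ?_
    intro x hx
    rw [← hX] at hx
    refine hO.mem_nhds ⟨?_, Metric.self_subset_thickening hε _ hx⟩
    obtain ⟨i, hi⟩ := hXU x hx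
    exact Set.mem_iUnion.mpr ⟨i, hCU i hi⟩
  refine ⟨D k, hDc k, hDcell k, ?_, ?_, Fin N, inferInstance, U,
    fun i => Subtype.val ⁻¹' (U i), hUo, fun x hx => (hk hx).1, hdiam,
    fun i => (hUo i).preimage continuous_subtype_val, ?_, ?_, ?_⟩
  · rw [hX]
    exact (Set.iInter_subset D (k + 1)).trans (hDnest k)
  · intro x hx
    exact (Metric.mem_thickening_iff_infDist_lt hXne).mp (hk hx).2
  · refine Set.eq_univ_of_forall fun x => ?_
    obtain ⟨i, hi⟩ := hXU x x.2
    exact Set.mem_iUnion.mpr ⟨i, hCU i hi⟩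
  · intro i
    refine lt_of_le_of_lt ?_ (hdiam i)
    refine Metric.diam_le_of_forall_dist_le Metric.diam_nonneg fun x hx y hy => ?_
    exact Metric.dist_le_diam_of_mem (Metric.isBounded_closedBall.subset (hUb i)) hx hy
  · intro S
    constructor
    · rintro ⟨x, hx⟩
      exact ⟨x, Set.mem_iInter₂.mpr fun i hi => Set.mem_iInter₂.mp hx i hi⟩
    · rintro ⟨x, hx⟩
      rcases S.eq_empty_or_nonempty with rfl | ⟨j, hj⟩
      · exact ⟨⟨_, hXne.some_mem⟩, by simp⟩
      obtain ⟨y, hy⟩ := hm S ⟨x, Set.mem_iInter₂.mpr fun i hi => by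
        have h1 : δ ≤ 1 / ((m S : ℝ) + 1) :=
          (min_le_left _ _).trans (Nat.one_div_le_one_div (hM S))
        exact Metric.cthickening_mono h1 _
          (Metric.thickening_subset_cthickening _ _ (Set.mem_iInter₂.mp hx i hi))⟩
      have hy' := Set.mem_iInter₂.mp hy
      exact ⟨⟨y, (hy' j hj).2⟩, Set.mem_iInter₂.mpr fun i hi => hCU i (hy' i hi)⟩
end

section
/- The subset X₂ = { (x, sin(1/x)) : x ∈ (0, 1] } ∪ ( {0} × [−1, 0) ) of ℝ², equipped with the subspace topology, is a locally compact space. (X₂ is the 'compressed sinusoid' CS = { (x, sin(1/x)) : x ∈ (0,1] } ∪ ( {0} × [−1, 1] ) with the continuum {0} × [0, 1] removed.) -/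
/-- **Example 5.2: the space `X₂` is locally compact.**
The subset `X₂ = {(x, sin(1/x)) : x ∈ (0,1]} ∪ ({0} × [−1, 0))` of `ℝ²` (the
"compressed sinusoid" with the continuum `{0} × [0,1]` removed), equipped with the
subspace topology, is a locally compact space. -/
theorem compressedSinusoid_minus_segment_locallyCompact :
    LocallyCompactSpace
      ({p : ℝ × ℝ |
        (p.1 ∈ Set.Ioc (0 : ℝ) 1 ∧ p.2 = Real.sin (1 / p.1)) ∨
        (p.1 = 0 ∧ p.2 ∈ Set.Ico (-1 : ℝ) 0)} : Set (ℝ × ℝ)) := by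
  apply IsLocallyClosed.locallyCompactSpace
  have hG : IsOpen {p : ℝ × ℝ | p.1 ≠ 0 ∧ p.2 - Real.sin (1 / p.1) ≠ 0} := by
    have hc : ContinuousOn (fun p : ℝ × ℝ => p.2 - Real.sin (1 / p.1)) {p | p.1 ≠ 0} := by
      apply ContinuousOn.sub continuous_snd.continuousOn
      apply Real.continuous_sin.comp_continuousOn
      exact continuousOn_const.div continuous_fst.continuousOn (fun p hp => hp)
    exact hc.isOpen_inter_preimage (isOpen_ne_fun continuous_fst continuous_const)
      (isOpen_ne (x := (0 : ℝ)))
  refine ⟨{p : ℝ × ℝ | p.1 ≠ 0} ∪ {p | p.2 < 0},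
    {p : ℝ × ℝ | p.1 ≠ 0 ∧ p.2 - Real.sin (1 / p.1) ≠ 0}ᶜ ∩
      (Set.Icc (0 : ℝ) 1 ×ˢ Set.Icc (-1 : ℝ) 1), ?_, ?_, ?_⟩
  · exact (isOpen_ne_fun continuous_fst continuous_const).union
      (isOpen_lt continuous_snd continuous_const)
  · exact hG.isClosed_compl.inter (isClosed_Icc.prod isClosed_Icc)
  · ext ⟨x, y⟩
    have h1 := Real.neg_one_le_sin (1 / x)
    have h2 := Real.sin_le_one (1 / x)
    simp only [Set.mem_setOf_eq, Set.mem_inter_iff, Set.mem_union, Set.mem_compl_iff,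
      Set.mem_prod, Set.mem_Icc, Set.mem_Ioc, Set.mem_Ico]
    generalize Real.sin (1 / x) = t at *
    constructor
    · rintro (⟨⟨ha, hb⟩, rfl⟩ | ⟨rfl, hb, hc⟩)
      · exact ⟨Or.inl ha.ne', by simp, ⟨ha.le, hb⟩, h1, h2⟩
      · exact ⟨Or.inr hc, by simp, by norm_num, hb, by linarith⟩
    · rintro ⟨hU, hn, ⟨ha, hb⟩, hc, hd⟩
      by_cases hx : x = 0
      · exact Or.inr ⟨hx, hc, hU.resolve_left (fun h => h hx)⟩
      · refine Or.inl ⟨⟨lt_of_le_of_ne ha (Ne.symm hx), hb⟩, ?_⟩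
        by_contra hy
        exact hn ⟨hx, sub_ne_zero.mpr hy⟩
end
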